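/- Orthonormality of ternary pf-relation states. Let N ≥ 1 and let ω₃ := exp(2πi/3). For tuples L = ((x_1,y_1),…,(x_ℓ,y_ℓ)) and R = ((x'_1,y'_1),…,(x'_r,y'_r)) in [N]×[N] with ℓ+r ≤ N, define pf_{L,R} ∈ ℓ²(S_N × ({0,1,2}^{[N]})) by pf_{L,R}(π,f) := (1/√((N−ℓ−r)!)) · 𝟙[π(x)=y for every pair (x,y) occurring in L or R] · (1/√(3^N)) · ω₃^{f(x_1)+⋯+f(x_ℓ) − (f(x'_1)+⋯+f(x'_r))}. Then for any two pairs of tuples (L,R) and (L',R') such that the concatenations L⌢R and L'⌢R' are bijective, ⟨pf_{L',R'}, pf_{L,R}⟩ equals 1 if L, L' are equal as multisets of pairs and R, R' are equal as multisets of pairs, and equals 0 otherwise. -/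

import Mathlib

/-!
The exponent of `ω₃` in `pf_{L,R}(π,f)` is `∑ₓ c(x) f(x)`, where the weight `c(x)` is `1` if `x` is
a first coordinate of `L`, `-1` if it is a first coordinate of `R`, and `0` otherwise
(`weight_eq_one_iff`, `weight_eq_neg_one_iff`). Hence the sum over `(π,f)` in the inner product
factors (`inner_eq`) into the number of permutations compatible with all four tuples and the
character sum `∏ₓ ∑ₐ ω₃^{(c(x) - c'(x)) a}`. As weights lie in `{-1,0,1}`, two of them agree modulo
`3` only if they are equal, so the character sum is `3^N` if `c = c'` and `0` otherwise
(`character_sum`).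

If the inner product is nonzero then `c = c'` and some permutation `π` is compatible with
everything. So `L` and `L'` have the same first coordinates and every pair in them has the form
`(x, π x)`, which makes them equal as multisets; likewise `R` and `R'`. Conversely, if the multisets
agree, both vectors coincide, and the squared norm is `1` because exactly `(N - ℓ - r)!`
permutations extend a bijective tuple of length `ℓ + r` (`card_extensions`).
-/

open Finset

/-- `ω₃ = exp(2πi/3)`. -/
noncomputable def omega3 : ℂ := Complex.exp (2 * Real.pi * Complex.I / 3)

/-- The ternary pf-relation vector `pf_{L,R} ∈ ℓ²(S_N × {0,1,2}^{[N]})`: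
`pf_{L,R}(π,f) = (1/√((N−ℓ−r)!)) · 𝟙[π x = y for all (x,y) in L or R] · (1/√(3^N)) ·
ω₃^{Σ_{(x,y)∈L} f(x) − Σ_{(x,y)∈R} f(x)}`. -/
noncomputable def pf3Vec (N ℓ r : ℕ) (L : Fin ℓ → Fin N × Fin N)
    (R : Fin r → Fin N × Fin N) :
    Equiv.Perm (Fin N) × (Fin N → Fin 3) → ℂ :=
  fun q =>
    (Real.sqrt ((N - (ℓ + r)).factorial) : ℂ)⁻¹ *
      (if (∀ i, q.1 (L i).1 = (L i).2) ∧ (∀ j, q.1 (R j).1 = (R j).2) then 1 else 0) *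
      (Real.sqrt (3 ^ N) : ℂ)⁻¹ *
      omega3 ^ ((∑ i, ((q.2 (L i).1 : ℕ) : ℤ)) - ∑ j, ((q.2 (R j).1 : ℕ) : ℤ))

/-- A tuple of pairs is bijective if its first coordinates are pairwise distinct and its
second coordinates are pairwise distinct. -/
def IsBijTuple {N t : ℕ} (p : Fin t → Fin N × Fin N) : Prop :=
  Function.Injective (fun i => (p i).1) ∧ Function.Injective (fun i => (p i).2)

/-- The coefficient of `f x` in the exponent of `ω₃` in `pf_{L,R}(π,f)`. -/
def weight {N ℓ r : ℕ} (L : Fin ℓ → Fin N × Fin N) (R : Fin r → Fin N × Fin N)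
    (x : Fin N) : ℤ :=
  (∑ i, if (L i).1 = x then 1 else 0) - ∑ j, if (R j).1 = x then 1 else 0

/-- The permutation `π` sends `x` to `y` for every pair `(x, y)` in `L` or `R`. -/
def Compat {N ℓ r : ℕ} (L : Fin ℓ → Fin N × Fin N) (R : Fin r → Fin N × Fin N)
    (π : Equiv.Perm (Fin N)) : Prop :=
  (∀ i, π (L i).1 = (L i).2) ∧ (∀ j, π (R j).1 = (R j).2)

instance {N ℓ r : ℕ} (L : Fin ℓ → Fin N × Fin N) (R : Fin r → Fin N × Fin N) :
    DecidablePred (Compat L R) := fun π => by unfold Compat; infer_instance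

/-! ### The third root of unity -/

lemma omega3_prim : IsPrimitiveRoot omega3 3 := by
  have := Complex.isPrimitiveRoot_exp 3 (by norm_num)
  simpa [omega3] using this

lemma omega3_ne_zero : omega3 ≠ 0 := Complex.exp_ne_zero _

lemma conj_omega3 : (starRingEnd ℂ) omega3 = omega3⁻¹ := by
  rw [omega3, ← Complex.exp_conj, ← Complex.exp_neg]
  congr 1
  simp [Complex.conj_ofNat, neg_div]

lemma sum_omega3_zpow (d : ℤ) :
    ∑ a : Fin 3, omega3 ^ (d * ((a : ℕ) : ℤ)) = if (3 : ℤ) ∣ d then 3 else 0 := by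
  have hiff := omega3_prim.zpow_eq_one_iff_dvd d
  have hpow : ∀ a : Fin 3, omega3 ^ (d * ((a : ℕ) : ℤ)) = (omega3 ^ d) ^ (a : ℕ) := fun a => by
    rw [zpow_mul, zpow_natCast]
  have hcube : (omega3 ^ d) ^ 3 = 1 := by
    rw [← zpow_natCast, ← zpow_mul, mul_comm, zpow_mul, zpow_natCast, omega3_prim.pow_eq_one,
      one_zpow]
  simp only [hpow, Fin.sum_univ_three]
  split_ifs with h
  · rw [hiff.2 (by exact_mod_cast h)]; norm_num
  · have hne : omega3 ^ d - 1 ≠ 0 := fun h' => h (by exact_mod_cast hiff.1 (sub_eq_zero.1 h'))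
    apply mul_left_cancel₀ hne
    simp only [Fin.val_zero, Fin.val_one, Fin.val_two, pow_zero, pow_one, mul_zero]
    linear_combination hcube

/-! ### Weights and the character sum -/

section Weights

variable {N ℓ r : ℕ} {L : Fin ℓ → Fin N × Fin N} {R : Fin r → Fin N × Fin N}

lemma fst_injective_left (h : IsBijTuple (Fin.append L R)) :
    Function.Injective fun i => (L i).1 := fun i j hij => by
  have := @h.1 (Fin.castAdd r i) (Fin.castAdd r j) (by simpa using hij)
  simpa using this

lemma fst_injective_right (h : IsBijTuple (Fin.append L R)) :
    Function.Injective fun i => (R i).1 := fun i j hij => by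
  have := @h.1 (Fin.natAdd ℓ i) (Fin.natAdd ℓ j) (by simpa using hij)
  simpa using this

lemma fst_ne (h : IsBijTuple (Fin.append L R)) (i : Fin ℓ) (j : Fin r) :
    (L i).1 ≠ (R j).1 := fun hij => by
  have := @h.1 (Fin.castAdd r i) (Fin.natAdd ℓ j) (by simpa using hij)
  have := congrArg Fin.val this
  simp at this
  omega

lemma sum_indicator {t : ℕ} {p : Fin t → Fin N × Fin N}
    (hp : Function.Injective fun i => (p i).1) (x : Fin N) [Decidable (∃ i, (p i).1 = x)] :
    (∑ i, if (p i).1 = x then (1 : ℤ) else 0) = if ∃ i, (p i).1 = x then 1 else 0 := by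
  split_ifs with h
  · obtain ⟨i, rfl⟩ := h
    have : ∀ j, ((p j).1 = (p i).1) ↔ j = i := fun j => hp.eq_iff
    simp [this]
  · push Not at h
    simp [h]

open scoped Classical in
lemma weight_eq (h : IsBijTuple (Fin.append L R)) (x : Fin N) :
    weight L R x =
      (if ∃ i, (L i).1 = x then 1 else 0) - if ∃ j, (R j).1 = x then 1 else 0 := by
  rw [weight, sum_indicator (fst_injective_left h), sum_indicator (fst_injective_right h)]

lemma not_both (h : IsBijTuple (Fin.append L R)) (x : Fin N) :
    ¬ ((∃ i, (L i).1 = x) ∧ ∃ j, (R j).1 = x) := by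
  rintro ⟨⟨i, hi⟩, j, hj⟩
  exact fst_ne h i j (hi.trans hj.symm)

lemma weight_eq_one_iff (h : IsBijTuple (Fin.append L R)) (x : Fin N) :
    weight L R x = 1 ↔ ∃ i, (L i).1 = x := by
  have := not_both h x
  rw [weight_eq h]
  split_ifs <;> simp_all

lemma weight_eq_neg_one_iff (h : IsBijTuple (Fin.append L R)) (x : Fin N) :
    weight L R x = -1 ↔ ∃ j, (R j).1 = x := by
  have := not_both h x
  rw [weight_eq h]
  split_ifs <;> simp_all

lemma weight_bounds (h : IsBijTuple (Fin.append L R)) (x : Fin N) :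
    -1 ≤ weight L R x ∧ weight L R x ≤ 1 := by
  rw [weight_eq h]
  split_ifs <;> simp

lemma exponent_eq (f : Fin N → Fin 3) :
    (∑ i, ((f (L i).1 : ℕ) : ℤ)) - ∑ j, ((f (R j).1 : ℕ) : ℤ)
      = ∑ x, weight L R x * ((f x : ℕ) : ℤ) := by
  simp only [weight, sub_mul, Finset.sum_sub_distrib, Finset.sum_mul]
  congr 1 <;> rw [Finset.sum_comm] <;> simp

end Weights

lemma character_sum {N ℓ r ℓ' r' : ℕ}
    {L : Fin ℓ → Fin N × Fin N} {R : Fin r → Fin N × Fin N}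
    {L' : Fin ℓ' → Fin N × Fin N} {R' : Fin r' → Fin N × Fin N}
    (h : IsBijTuple (Fin.append L R)) (h' : IsBijTuple (Fin.append L' R')) :
    (∑ f : Fin N → Fin 3,
      omega3 ^ ∑ x, (weight L R x - weight L' R' x) * ((f x : ℕ) : ℤ))
      = if weight L R = weight L' R' then 3 ^ N else 0 := by
  have hzpow : ∀ g : Fin N → ℤ, omega3 ^ ∑ x, g x = ∏ x, omega3 ^ g x := fun g => by
    induction (Finset.univ : Finset (Fin N)) using Finset.induction_on with
    | empty => simp
    | insert a s ha ih =>
      rw [Finset.sum_insert ha, Finset.prod_insert ha, zpow_add₀ omega3_ne_zero, ih]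
  simp only [hzpow]
  have key := Finset.prod_univ_sum (fun _ : Fin N => (Finset.univ : Finset (Fin 3)))
    (fun x a => omega3 ^ ((weight L R x - weight L' R' x) * ((a : ℕ) : ℤ)))
  rw [Fintype.piFinset_univ] at key
  rw [← key]
  simp only [sum_omega3_zpow]
  split_ifs with hw
  · simp [hw]
  · obtain ⟨x, hx⟩ := Function.ne_iff.1 hw
    apply Finset.prod_eq_zero (Finset.mem_univ x)
    have h1 := weight_bounds h x
    have h2 := weight_bounds h' x
    rw [if_neg]
    omega

/-! ### Counting compatible permutations -/

lemma card_extensions {N t : ℕ} (p : Fin t → Fin N × Fin N) (h : IsBijTuple p) :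
    Fintype.card {π : Equiv.Perm (Fin N) // ∀ i, π (p i).1 = (p i).2} = (N - t).factorial := by
  classical
  let e : {x // x ∈ Set.range fun i => (p i).1} ≃ {x // x ∈ Set.range fun i => (p i).2} :=
    (Equiv.ofInjective _ h.1).symm.trans (Equiv.ofInjective _ h.2)
  let π₀ : Equiv.Perm (Fin N) := e.extendSubtype
  have hπ₀ : ∀ i, π₀ (p i).1 = (p i).2 := fun i => by
    have hmem : (p i).1 ∈ Set.range fun i => (p i).1 := ⟨i, rfl⟩
    have h1 : π₀ (p i).1 = e ⟨(p i).1, hmem⟩ := e.extendSubtype_apply_of_mem _ hmem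
    have h2 : (Equiv.ofInjective _ h.1).symm ⟨(p i).1, hmem⟩ = i :=
      Equiv.ofInjective_symm_apply h.1 i
    rw [h1]
    simp only [e, Equiv.trans_apply, h2, Equiv.ofInjective_apply]
  -- Left multiplication by `π₀⁻¹` turns extensions of `p` into permutations that fix the
  -- first coordinates of `p`.
  let E : {π : Equiv.Perm (Fin N) // ∀ i, π (p i).1 = (p i).2} ≃
      {σ : Equiv.Perm (Fin N) // ∀ a, ¬ (a ∉ Set.range fun i => (p i).1) → σ a = a} :=
    (Equiv.mulLeft π₀⁻¹).subtypeEquiv fun π => by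
      simp only [not_not, Set.forall_mem_range, Equiv.coe_mulLeft, Equiv.Perm.mul_apply,
        Equiv.Perm.inv_eq_iff_eq, hπ₀]

  rw [Fintype.card_congr (E.trans (Equiv.Perm.subtypeEquivSubtypePerm _).symm),
    Fintype.card_perm, Fintype.card_subtype_compl, Fintype.card_fin]
  congr 2
  exact (Fintype.card_congr (Equiv.ofInjective _ h.1).symm).trans (Fintype.card_fin t)

lemma card_compat {N ℓ r : ℕ} {L : Fin ℓ → Fin N × Fin N} {R : Fin r → Fin N × Fin N}
    (h : IsBijTuple (Fin.append L R)) :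
    Fintype.card {π // Compat L R π} = (N - (ℓ + r)).factorial := by
  rw [← card_extensions _ h]
  apply Fintype.card_congr
  refine Equiv.subtypeEquivRight fun π => ?_
  constructor
  · rintro ⟨h1, h2⟩ i
    refine Fin.addCases (fun i => ?_) (fun j => ?_) i
    · simpa using h1 i
    · simpa using h2 j
  · intro h
    exact ⟨fun i => by simpa using h (Fin.castAdd r i), fun j => by simpa using h (Fin.natAdd ℓ j)⟩

/-! ### The inner product -/

lemma pf3Vec_eq {N ℓ r : ℕ} (L : Fin ℓ → Fin N × Fin N) (R : Fin r → Fin N × Fin N)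
    (π : Equiv.Perm (Fin N)) (f : Fin N → Fin 3) :
    pf3Vec N ℓ r L R (π, f) =
      (Real.sqrt ((N - (ℓ + r)).factorial) : ℂ)⁻¹ * (if Compat L R π then 1 else 0) *
      (Real.sqrt (3 ^ N) : ℂ)⁻¹ * omega3 ^ ∑ x, weight L R x * ((f x : ℕ) : ℤ) := by
  rw [← exponent_eq]
  simp only [pf3Vec, Compat]

lemma inner_eq {N ℓ r ℓ' r' : ℕ}
    {L : Fin ℓ → Fin N × Fin N} {R : Fin r → Fin N × Fin N}
    {L' : Fin ℓ' → Fin N × Fin N} {R' : Fin r' → Fin N × Fin N}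
    (h : IsBijTuple (Fin.append L R)) (h' : IsBijTuple (Fin.append L' R')) :
    (∑ q : Equiv.Perm (Fin N) × (Fin N → Fin 3),
        (starRingEnd ℂ) (pf3Vec N ℓ' r' L' R' q) * pf3Vec N ℓ r L R q) =
      ((Real.sqrt ((N - (ℓ' + r')).factorial) : ℂ)⁻¹ *
        (Real.sqrt ((N - (ℓ + r)).factorial) : ℂ)⁻¹) *
      (∑ π : Equiv.Perm (Fin N), if Compat L' R' π ∧ Compat L R π then (1 : ℂ) else 0) *
      if weight L R = weight L' R' then 1 else 0 := by
  have h3 : (Real.sqrt (3 ^ N) : ℂ)⁻¹ * (Real.sqrt (3 ^ N) : ℂ)⁻¹ * 3 ^ N = 1 := by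
    have : (Real.sqrt (3 ^ N) : ℂ) * (Real.sqrt (3 ^ N) : ℂ) = 3 ^ N := by
      rw [← Complex.ofReal_mul, Real.mul_self_sqrt (by positivity)]
      push_cast
      rfl
    rw [← mul_inv, this]
    exact inv_mul_cancel₀ (pow_ne_zero _ (by norm_num))
  have hchar : (if weight L R = weight L' R' then (1 : ℂ) else 0) =
      (Real.sqrt (3 ^ N) : ℂ)⁻¹ * (Real.sqrt (3 ^ N) : ℂ)⁻¹ * ∑ f : Fin N → Fin 3,
        omega3 ^ ∑ x, (weight L R x - weight L' R' x) * ((f x : ℕ) : ℤ) := by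
    rw [character_sum h h']
    split_ifs
    · exact h3.symm
    · simp
  rw [hchar, Fintype.sum_prod_type]
  simp only [Finset.mul_sum, Finset.sum_mul]
  rw [Finset.sum_comm]
  refine Finset.sum_congr rfl fun f _ => Finset.sum_congr rfl fun π _ => ?_
  have hexp : (starRingEnd ℂ) (omega3 ^ ∑ x, weight L' R' x * ((f x : ℕ) : ℤ)) *
      omega3 ^ (∑ x, weight L R x * ((f x : ℕ) : ℤ)) =
      omega3 ^ ∑ x, (weight L R x - weight L' R' x) * ((f x : ℕ) : ℤ) := by
    rw [map_zpow₀, conj_omega3, inv_zpow', ← zpow_add₀ omega3_ne_zero]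
    congr 1
    simp only [sub_mul, Finset.sum_sub_distrib]
    ring
  rw [pf3Vec_eq, pf3Vec_eq, ← hexp]
  by_cases h1 : Compat L' R' π <;> by_cases h2 : Compat L R π <;>
    simp [h1, h2, map_mul, map_inv₀, Complex.conj_ofReal]
  ring

/-! ### Multisets of pairs -/

/-- `pf_{L,R}` depends only on the multisets underlying `L` and `R`. -/
lemma pf3Vec_congr {N ℓ r ℓ' r' : ℕ}
    {L : Fin ℓ → Fin N × Fin N} {R : Fin r → Fin N × Fin N}
    {L' : Fin ℓ' → Fin N × Fin N} {R' : Fin r' → Fin N × Fin N}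
    (hL : (List.ofFn L : Multiset (Fin N × Fin N)) = (List.ofFn L' : Multiset (Fin N × Fin N)))
    (hR : (List.ofFn R : Multiset (Fin N × Fin N)) = (List.ofFn R' : Multiset (Fin N × Fin N))) :
    pf3Vec N ℓ' r' L' R' = pf3Vec N ℓ r L R := by
  have hlen : ∀ {s t : ℕ} {A : Fin s → Fin N × Fin N} {B : Fin t → Fin N × Fin N},
      (List.ofFn A : Multiset (Fin N × Fin N)) = (List.ofFn B : Multiset (Fin N × Fin N)) →
      t = s := fun h => by simpa using (congrArg Multiset.card h).symm
  have hall : ∀ {s t : ℕ} {A : Fin s → Fin N × Fin N} {B : Fin t → Fin N × Fin N},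
      (List.ofFn A : Multiset (Fin N × Fin N)) = (List.ofFn B : Multiset (Fin N × Fin N)) →
      ∀ π : Equiv.Perm (Fin N),
        (∀ i, π (B i).1 = (B i).2) = ∀ i, π (A i).1 = (A i).2 := fun {s t A B} h π => by
    have := Multiset.coe_eq_coe.1 h
    rw [eq_iff_iff, ← List.forall_mem_ofFn_iff (P := fun q : Fin N × Fin N => π q.1 = q.2),
      ← List.forall_mem_ofFn_iff (P := fun q : Fin N × Fin N => π q.1 = q.2)]
    simp only [this.mem_iff]
  have hsum : ∀ {s t : ℕ} {A : Fin s → Fin N × Fin N} {B : Fin t → Fin N × Fin N},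
      (List.ofFn A : Multiset (Fin N × Fin N)) = (List.ofFn B : Multiset (Fin N × Fin N)) →
      ∀ f : Fin N → Fin 3,
        ∑ i, ((f (B i).1 : ℕ) : ℤ) = ∑ i, ((f (A i).1 : ℕ) : ℤ) := fun {s t A B} h f => by
    have := ((Multiset.coe_eq_coe.1 h).map fun q : Fin N × Fin N => ((f q.1 : ℕ) : ℤ)).sum_eq
    simpa [List.map_ofFn, List.sum_ofFn] using this.symm
  funext q
  simp only [pf3Vec, hlen hL, hlen hR, hall hL, hall hR, hsum hL, hsum hR]

/-- Two tuples with distinct first coordinates that lie on the graph of one permutation and have the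
same first coordinates are equal as multisets. -/
lemma multiset_eq_of_graph {N s t : ℕ} {A : Fin s → Fin N × Fin N} {B : Fin t → Fin N × Fin N}
    (hA : Function.Injective fun i => (A i).1) (hB : Function.Injective fun i => (B i).1)
    (π : Equiv.Perm (Fin N)) (hπA : ∀ i, π (A i).1 = (A i).2) (hπB : ∀ i, π (B i).1 = (B i).2)
    (hAB : ∀ x, (∃ i, (A i).1 = x) ↔ ∃ i, (B i).1 = x) :
    (List.ofFn A : Multiset (Fin N × Fin N)) = (List.ofFn B : Multiset (Fin N × Fin N)) := by
  have hmem : ∀ {u : ℕ} {C : Fin u → Fin N × Fin N}, (∀ i, π (C i).1 = (C i).2) →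
      ∀ q, q ∈ List.ofFn C ↔ (∃ i, (C i).1 = q.1) ∧ π q.1 = q.2 := fun {u C} hC q => by
    rw [List.mem_ofFn]
    constructor
    · rintro ⟨i, rfl⟩
      exact ⟨⟨i, rfl⟩, hC i⟩
    · rintro ⟨⟨i, hi⟩, hq⟩
      exact ⟨i, Prod.ext hi (by rw [← hC i, hi, hq])⟩
  refine (Multiset.Nodup.ext ?_ ?_).2 fun q => ?_
  · exact Multiset.coe_nodup.2 (List.nodup_ofFn.2 fun i j hij => hA (congrArg Prod.fst hij))
  · exact Multiset.coe_nodup.2 (List.nodup_ofFn.2 fun i j hij => hB (congrArg Prod.fst hij))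
  · rw [Multiset.mem_coe, Multiset.mem_coe, hmem hπA, hmem hπB, hAB]

/-- **Orthonormality of ternary pf-relation states.** For pairs of tuples `(L,R)` and
`(L',R')` whose concatenations are bijective, `⟨pf_{L',R'}, pf_{L,R}⟩ = 1` if `L,L'` agree
as multisets and `R,R'` agree as multisets, and `= 0` otherwise. -/
theorem ternary_pf_states_orthonormal (N ℓ r ℓ' r' : ℕ) (hN : 1 ≤ N)
    (hlen : ℓ + r ≤ N) (hlen' : ℓ' + r' ≤ N)
    (L : Fin ℓ → Fin N × Fin N) (R : Fin r → Fin N × Fin N)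
    (L' : Fin ℓ' → Fin N × Fin N) (R' : Fin r' → Fin N × Fin N)
    (hbij : IsBijTuple (Fin.append L R)) (hbij' : IsBijTuple (Fin.append L' R')) :
    (∑ q : Equiv.Perm (Fin N) × (Fin N → Fin 3),
        (starRingEnd ℂ) (pf3Vec N ℓ' r' L' R' q) * pf3Vec N ℓ r L R q)
      = if (List.ofFn L : Multiset (Fin N × Fin N)) = (List.ofFn L' : Multiset (Fin N × Fin N))
          ∧ (List.ofFn R : Multiset (Fin N × Fin N)) = (List.ofFn R' : Multiset (Fin N × Fin N))
        then 1 else 0 := by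
  split_ifs with heq
  · rw [pf3Vec_congr heq.1 heq.2, inner_eq hbij hbij, if_pos rfl, mul_one]
    have hcount : (∑ π : Equiv.Perm (Fin N), if Compat L R π ∧ Compat L R π then (1 : ℂ) else 0)
        = ((N - (ℓ + r)).factorial : ℂ) := by
      simp only [and_self, Finset.sum_boole]
      rw [← card_compat hbij, Fintype.card_subtype]
    have hsq : (Real.sqrt ((N - (ℓ + r)).factorial) : ℂ) * Real.sqrt ((N - (ℓ + r)).factorial)
        = ((N - (ℓ + r)).factorial : ℂ) := by
      rw [← Complex.ofReal_mul, Real.mul_self_sqrt (by positivity)]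
      push_cast
      rfl
    rw [hcount, ← mul_inv, hsq]
    exact inv_mul_cancel₀ (by exact_mod_cast Nat.factorial_ne_zero _)
  · rw [inner_eq hbij hbij']
    by_cases hw : weight L R = weight L' R'
    · rw [Finset.sum_eq_zero, mul_zero, zero_mul]
      intro π _
      refine if_neg fun hπ => heq ⟨?_, ?_⟩
      · refine multiset_eq_of_graph (fst_injective_left hbij) (fst_injective_left hbij') π
          hπ.2.1 hπ.1.1 fun x => ?_
        rw [← weight_eq_one_iff hbij, ← weight_eq_one_iff hbij', hw]
      · refine multiset_eq_of_graph (fst_injective_right hbij) (fst_injective_right hbij') π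
          hπ.2.2 hπ.1.2 fun x => ?_
        rw [← weight_eq_neg_one_iff hbij, ← weight_eq_neg_one_iff hbij', hw]
    · rw [if_neg hw, mul_zero]
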